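/- arXiv:2111.10851 — 2 statements merged into one kernel-verified Lean document; each statement's English description precedes it below -/
import Mathlib

section
/- Let Δ be a simplicial complex on [n] with Stanley-Reisner ideal I = I_Δ in R = K[x_1,…,x_n]. If Δ has a shedding vertex v such that both link_Δ(v) and del_Δ(v) are sequentially Cohen-Macaulay, then depth(R/I) = min{ depth(R/(I : x_v)), depth(R/(I + (x_v))) } = n − bigh(I), where bigh(I) is the maximum height of an associated prime of I. -/
open MvPolynomial

namespace Paper

/-- An (abstract) simplicial complex: a nonempty, downward closed collection of
finite subsets of the vertex set. -/
def IsComplex {n : ℕ} (Δ : Set (Finset (Fin n))) : Prop :=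
  Δ.Nonempty ∧ ∀ F ∈ Δ, ∀ G, G ⊆ F → G ∈ Δ

/-- The deletion `del_Δ(v)`. -/
def delC {n : ℕ} (Δ : Set (Finset (Fin n))) (v : Fin n) : Set (Finset (Fin n)) :=
  {G ∈ Δ | v ∉ G}

/-- The link `link_Δ(v)`. -/
def linkC {n : ℕ} (Δ : Set (Finset (Fin n))) (v : Fin n) : Set (Finset (Fin n)) :=
  {G | G ∈ Δ ∧ v ∉ G ∧ insert v G ∈ Δ}

/-- A facet is a maximal face. -/
def IsFacet {n : ℕ} (Δ : Set (Finset (Fin n))) (F : Finset (Fin n)) : Prop :=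
  F ∈ Δ ∧ ∀ G ∈ Δ, F ⊆ G → G = F

/-- A vertex `v` of `Δ` is a shedding vertex if every facet of `del_Δ(v)` is a facet
of `Δ`. -/
def IsSheddingVertex {n : ℕ} (Δ : Set (Finset (Fin n))) (v : Fin n) : Prop :=
  {v} ∈ Δ ∧ ∀ F, IsFacet (delC Δ v) F → IsFacet Δ F

/-- `Δ` is a simplex: it has a unique maximal face containing all faces. -/
def IsSimplexC {n : ℕ} (Δ : Set (Finset (Fin n))) : Prop :=
  ∃ F ∈ Δ, ∀ G ∈ Δ, G ⊆ F

/-- Vertex decomposability, defined recursively. -/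
inductive IsVertexDecomposable {n : ℕ} : Set (Finset (Fin n)) → Prop
  | simplex {Δ : Set (Finset (Fin n))} (h : IsComplex Δ) (hs : IsSimplexC Δ) :
      IsVertexDecomposable Δ
  | step {Δ : Set (Finset (Fin n))} (h : IsComplex Δ) (v : Fin n)
      (hv : IsSheddingVertex Δ v)
      (h1 : IsVertexDecomposable (linkC Δ v)) (h2 : IsVertexDecomposable (delC Δ v)) :
      IsVertexDecomposable Δ

/-- The Stanley-Reisner ideal of `Δ`, generated by the squarefree monomials
`x_F = ∏_{i ∈ F} x_i` with `F ∉ Δ`. -/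
noncomputable def SRIdeal (n : ℕ) (K : Type) [Field K] (Δ : Set (Finset (Fin n))) :
    Ideal (MvPolynomial (Fin n) K) :=
  Ideal.span {m | ∃ F : Finset (Fin n), F ∉ Δ ∧ m = ∏ i ∈ F, X i}

/-- `P_{F̄}`, the prime ideal generated by the variables `x_i` with `i ∉ F`. -/
noncomputable def facePrime (n : ℕ) (K : Type) [Field K] (F : Finset (Fin n)) :
    Ideal (MvPolynomial (Fin n) K) :=
  Ideal.span ((fun i => (X i : MvPolynomial (Fin n) K)) '' {i | i ∉ F})

/-- The depth of a module `M` with respect to an ideal `J`: the supremum of lengths of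
`M`-regular sequences consisting of elements of `J`. -/
noncomputable def depth {A : Type} [CommRing A] (J : Ideal A)
    (M : Type) [AddCommGroup M] [Module A M] : ℕ∞ :=
  sSup {k : ℕ∞ | ∃ rs : List A, (rs.length : ℕ∞) = k ∧ (∀ r ∈ rs, r ∈ J) ∧
    RingTheory.Sequence.IsRegular M rs}

/-- The irrelevant maximal ideal `𝔪 = (x_1, …, x_n)` of `K[x_1, …, x_n]`. -/
noncomputable def mIdeal (n : ℕ) (K : Type) [Field K] : Ideal (MvPolynomial (Fin n) K) :=
  Ideal.span (Set.range X)

/-- The Krull dimension of a module, `dim M = dim (A / ann M)`. -/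
noncomputable def mdim (A : Type) [CommRing A] (M : Type) [AddCommGroup M] [Module A M] :
    WithBot ℕ∞ :=
  ringKrullDim (A ⧸ Module.annihilator A M)

/-- A module over `K[x_1, …, x_n]` is Cohen-Macaulay if its depth with respect to the
irrelevant maximal ideal equals its Krull dimension. -/
def IsCMMod (n : ℕ) (K : Type) [Field K] (M : Type) [AddCommGroup M]
    [Module (MvPolynomial (Fin n) K) M] : Prop :=
  (depth (mIdeal n K) M : WithBot ℕ∞) = mdim (MvPolynomial (Fin n) K) M

/-- A module over `K[x_1, …, x_n]` is sequentially Cohen-Macaulay if it admits a finite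
filtration `0 = M_0 ⊂ M_1 ⊂ ⋯ ⊂ M_r = M` with Cohen-Macaulay quotients of strictly
increasing dimensions. -/
def IsSeqCMMod (n : ℕ) (K : Type) [Field K] (M : Type) [AddCommGroup M]
    [Module (MvPolynomial (Fin n) K) M] : Prop :=
  ∃ (r : ℕ) (f : Fin (r + 1) → Submodule (MvPolynomial (Fin n) K) M),
    f 0 = ⊥ ∧ f (Fin.last r) = ⊤ ∧ StrictMono f ∧
    (∀ i : Fin r,
      IsCMMod n K (↥(f i.succ) ⧸ Submodule.comap (f i.succ).subtype (f i.castSucc))) ∧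
    ∀ i j : Fin r, i < j →
      mdim (MvPolynomial (Fin n) K)
          (↥(f i.succ) ⧸ Submodule.comap (f i.succ).subtype (f i.castSucc)) <
        mdim (MvPolynomial (Fin n) K)
          (↥(f j.succ) ⧸ Submodule.comap (f j.succ).subtype (f j.castSucc))

/-- Height of an ideal (meaningful for prime ideals). -/
noncomputable def htP {A : Type} [CommRing A] (𝔭 : Ideal A) : ℕ∞ :=
  ⨆ (h : 𝔭.IsPrime), Order.height (⟨𝔭, h⟩ : PrimeSpectrum A)

/-- The big height of `I`: the maximum of the heights of the associated primes of `I`. -/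
noncomputable def bigh {A : Type} [CommRing A] (I : Ideal A) : ℕ∞ :=
  ⨆ 𝔭 ∈ associatedPrimes A (A ⧸ I), htP 𝔭

/-! Write `d = n - bigh I_Δ`, the smallest cardinality of a facet of `Δ`. For every complex
`depth R/I_Δ ≤ d`: the primes `P_F` of the facets `F` are the associated primes of `R/I_Δ`, and a
regular sequence of length `k` in `𝔪` forces a chain of `k` strict inclusions of primes from any of
them up to `𝔪`. If `R/I_Δ` is sequentially Cohen-Macaulay, then equality holds: the bottom step of
the filtration has the smallest dimension, hence the smallest depth, and contributes an associated
prime `P_F` with `dim R/P_F = |F|` at most the depth.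

For a vertex `v`, `I_Δ : x_v` is the ideal of the star of `v` and `I_Δ + (x_v)` that of the
deletion. The star is a cone over the link, so it attains its bound when the link does. The sequence
`0 → R/(I_Δ : x_v) → R/I_Δ → R/(I_Δ + (x_v)) → 0` bounds `depth R/I_Δ` below by the minimum of the
outer depths. As `v` is shedding, the facets of `Δ` are precisely those of the star together with
those of the deletion, so this minimum equals `d`. -/

open CategoryTheory Abelian RingTheory.Sequence Pointwise

universe u

section Depth

theorem htP_eq_height {A : Type} [CommRing A] (p : Ideal A) [h : p.IsPrime] : htP p = p.height := by
  rw [htP, iSup_pos h]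
  exact (PrimeSpectrum.height_eq_orderHeight ⟨p, h⟩).symm

/-- The groups `Ext^i(A/J, M)` vanish for `i < k`; by Rees' theorem this says that the grade of `J`
on `M` is at least `k`, in a form suited to long exact sequences. -/
def ExtVanishesBelow {A : Type u} [CommRing A] (J : Ideal A) (k : ℕ) (M : Type u)
    [AddCommGroup M] [Module A M] : Prop :=
  ∀ i < k, Subsingleton (Ext (ModuleCat.of A (A ⧸ J)) (ModuleCat.of A M) i)

namespace ExtVanishesBelow

variable {A : Type u} [CommRing A] {J : Ideal A} {k : ℕ} {M N P : Type u}
  [AddCommGroup M] [Module A M] [AddCommGroup N] [Module A N] [AddCommGroup P] [Module A P]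

theorem of_forall_smul_eq_self {a : A} (haJ : a ∈ J) (ha : ∀ x : M, a • x = x) :
    ExtVanishesBelow J k M := by
  intro i _
  have hann : a ∈ Module.annihilator A (A ⧸ J) := by rwa [Ideal.annihilator_quotient]
  have hid : a • 𝟙 (ModuleCat.of A M) = 𝟙 _ := by ext x; exact ha x
  have hzero := Ext.postcomp_smul_id_eq_zero_of_mem_annihilator
    (N := ModuleCat.of A (A ⧸ J)) (M := ModuleCat.of A M) hann i
  refine subsingleton_of_forall_eq 0 fun e => ?_
  have := ConcreteCategory.congr_hom hzero e
  simpa [hid] using this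

theorem of_exact {f : M →ₗ[A] N} {g : N →ₗ[A] P} (hf : Function.Injective f)
    (hg : Function.Surjective g) (hfg : Function.Exact f g) (hM : ExtVanishesBelow J k M)
    (hP : ExtVanishesBelow J k P) : ExtVanishesBelow J k N := by
  intro i hi
  have hS : (ShortComplex.mk (ModuleCat.ofHom f) (ModuleCat.ofHom g)
      (by ext x; exact hfg.apply_apply_eq_zero x)).ShortExact :=
    { exact := (ShortComplex.ShortExact.moduleCat_exact_iff_function_exact _).2 hfg
      mono_f := (ModuleCat.mono_iff_injective _).2 hf
      epi_g := (ModuleCat.epi_iff_surjective _).2 hg }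
  have := hM i hi
  have := hP i hi
  refine subsingleton_of_forall_eq 0 fun e => ?_
  obtain ⟨x, rfl⟩ := Ext.covariant_sequence_exact₂ (ModuleCat.of A (A ⧸ J)) hS e
    (Subsingleton.elim (α := Ext _ (ModuleCat.of A P) i) _ _)
  rw [Subsingleton.elim (α := Ext _ (ModuleCat.of A M) i) x 0, Ext.zero_comp]

theorem of_linearEquiv (e : M ≃ₗ[A] N) (h : ExtVanishesBelow J k M) : ExtVanishesBelow J k N :=
  of_exact (P := PUnit) (f := e.toLinearMap) (g := 0) e.injective (fun _ => ⟨0, rfl⟩)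
    (fun x => by simp) h
    (of_forall_smul_eq_self J.zero_mem fun _ => Subsingleton.elim _ _)

theorem of_smul_top_eq_top [Module.Finite A M] (h : J • (⊤ : Submodule A M) = ⊤) :
    ExtVanishesBelow J k M := by
  obtain ⟨r, hr, hrM⟩ :=
    Submodule.exists_mem_and_smul_eq_self_of_fg_of_le_smul J ⊤ Module.Finite.fg_top h.ge
  exact of_forall_smul_eq_self hr fun x => hrM x trivial

end ExtVanishesBelow

variable {A : Type} [CommRing A] {J : Ideal A} {M N P : Type} [AddCommGroup M] [Module A M]
  [AddCommGroup N] [Module A N] [AddCommGroup P] [Module A P]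

theorem length_le_depth {rs : List A} (hJ : ∀ r ∈ rs, r ∈ J) (h : IsRegular M rs) :
    (rs.length : ℕ∞) ≤ depth J M :=
  le_sSup ⟨rs, rfl, hJ, h⟩

theorem depth_le {c : ℕ∞}
    (h : ∀ rs : List A, (∀ r ∈ rs, r ∈ J) → IsRegular M rs → (rs.length : ℕ∞) ≤ c) :
    depth J M ≤ c :=
  sSup_le fun _ ⟨rs, hk, hJ, hrs⟩ => hk ▸ h rs hJ hrs

theorem depth_congr (e : M ≃ₗ[A] N) : depth J M = depth J N := by
  simp only [depth, e.isRegular_congr]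

theorem depth_quotSMulTop_add_one_le {x : A} (hx : x ∈ J) (reg : IsSMulRegular M x)
    [Nontrivial (QuotSMulTop x M)] : depth J (QuotSMulTop x M) + 1 ≤ depth J M := by
  rw [depth, ENat.sSup_add]
  · refine iSup₂_le ?_
    rintro _ ⟨rs, rfl, hJ, hrs⟩
    exact_mod_cast length_le_depth (List.forall_mem_cons.2 ⟨hx, hJ⟩) (hrs.cons reg)
  · exact ⟨0, [], by simp, by simp, IsRegular.nil A _⟩

theorem extVanishesBelow_of_le_depth [IsNoetherianRing A] [Module.Finite A M] {k : ℕ}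
    (h : (k : ℕ∞) ≤ depth J M) : ExtVanishesBelow J k M := by
  rcases eq_or_ne (J • (⊤ : Submodule A M)) ⊤ with htop | htop
  · exact .of_smul_top_eq_top htop
  intro i hi
  obtain ⟨_, ⟨rs, rfl, hJ, hrs⟩, hlt⟩ := lt_sSup_iff.1 ((Nat.cast_lt.2 hi).trans_le h)
  exact ModuleCat.subsingleton_ext_of_exists_isRegular J (ModuleCat.of A (A ⧸ J))
    (by rw [Module.support_eq_zeroLocus, Ideal.annihilator_quotient]) (ModuleCat.of A M)
    htop.lt_top rs hJ hrs i (Nat.cast_lt.1 hlt)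

theorem ExtVanishesBelow.le_depth [IsNoetherianRing A] [Module.Finite A M] {k : ℕ}
    (h : ExtVanishesBelow J k M) (htop : J • (⊤ : Submodule A M) ≠ ⊤) : (k : ℕ∞) ≤ depth J M := by
  obtain ⟨rs, rfl, hJ, hrs⟩ := ModuleCat.exists_isRegular_of_exists_subsingleton_ext J k
    (ModuleCat.of A M) htop.lt_top (ModuleCat.of A (A ⧸ J))
    (by rw [Module.support_eq_zeroLocus, Ideal.annihilator_quotient]) h
  exact length_le_depth hJ hrs

theorem min_depth_le_of_exact [IsNoetherianRing A] [Module.Finite A M] [Module.Finite A N]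
    [Module.Finite A P] {f : M →ₗ[A] N} {g : N →ₗ[A] P} (hf : Function.Injective f)
    (hg : Function.Surjective g) (hfg : Function.Exact f g)
    (htop : J • (⊤ : Submodule A N) ≠ ⊤) : min (depth J M) (depth J P) ≤ depth J N :=
  ENat.forall_natCast_le_iff_le.1 fun _ hk =>
    (ExtVanishesBelow.of_exact hf hg hfg (extVanishesBelow_of_le_depth (le_min_iff.1 hk).1)
      (extVanishesBelow_of_le_depth (le_min_iff.1 hk).2)).le_depth htop

theorem smul_top_quotient_ne_top {I : Ideal A} (hIJ : I ≤ J) (hJ : J ≠ ⊤) :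
    J • (⊤ : Submodule A (A ⧸ I)) ≠ ⊤ := by
  intro h
  have hcomap := Submodule.comap_smul_top_of_surjective J I.mkQ I.mkQ_surjective
  rw [h, Submodule.comap_top, Submodule.ker_mkQ, smul_eq_mul, Ideal.mul_top,
    sup_eq_left.2 hIJ] at hcomap
  exact hJ hcomap.symm

theorem min_depth_colon_le [IsNoetherianRing A] {I : Ideal A} (x : A) (hIJ : I ≤ J) (hJ : J ≠ ⊤) :
    min (depth J (A ⧸ I.colon (Ideal.span {x}))) (depth J (A ⧸ (I + Ideal.span {x}))) ≤
      depth J (A ⧸ I) := by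
  have hcolon : I.colon (Ideal.span {x}) = Submodule.comap (LinearMap.mulRight A x) I := by
    ext a
    exact Ideal.mem_colon_span_singleton
  have hspan : LinearMap.range (LinearMap.mulRight A x) = Ideal.span {x} := by
    ext a
    simp [Ideal.mem_span_singleton']
  refine min_depth_le_of_exact (f := Submodule.mapQ _ I (LinearMap.mulRight A x) hcolon.le)
    (g := Submodule.factor le_sup_left) ?_ (Submodule.factor_surjective _) ?_
    (smul_top_quotient_ne_top hIJ hJ)
  · rw [← LinearMap.ker_eq_bot, Submodule.ker_mapQ, ← hcolon, Submodule.mkQ_map_self]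
  · rw [LinearMap.exact_iff, Submodule.factor, Submodule.ker_mapQ, Submodule.range_mapQ, hspan,
      Submodule.comap_id, Submodule.add_eq_sup, Submodule.map_sup, Submodule.mkQ_map_self,
      bot_sup_eq]

theorem isSMulRegular_quotient_iff {I : Ideal A} {x : A} :
    IsSMulRegular (A ⧸ I) x ↔ ∀ a, x * a ∈ I → a ∈ I := by
  rw [isSMulRegular_iff_right_eq_zero_of_smul, I.mkQ_surjective.forall]
  exact forall_congr' fun a =>
    imp_congr (Submodule.Quotient.mk_eq_zero I (x := x * a)) (Submodule.Quotient.mk_eq_zero I)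

theorem depth_quotient_add_span_add_one_le {I : Ideal A} {x : A} (hx : x ∈ J)
    (reg : IsSMulRegular (A ⧸ I) x) (hIJ : I ≤ J) (hJ : J ≠ ⊤) :
    depth J (A ⧸ (I + Ideal.span {x})) + 1 ≤ depth J (A ⧸ I) := by
  have hsmul : Submodule.map I.mkQ (Ideal.span {x}) = x • (⊤ : Submodule A (A ⧸ I)) := by
    rw [← Submodule.ideal_span_singleton_smul, ← I.range_mkQ, ← Submodule.map_top,
      ← Submodule.map_smul'', smul_eq_mul, Ideal.mul_top]
  let e := (Submodule.quotEquivOfEq _ _ hsmul).symm.trans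
    (Submodule.quotientQuotientEquivQuotientSup I (Ideal.span {x}))
  have : Nontrivial (QuotSMulTop x (A ⧸ I)) := by
    rw [Submodule.Quotient.nontrivial_iff, ← Submodule.ideal_span_singleton_smul]
    exact ne_top_of_le_ne_top (smul_top_quotient_ne_top hIJ hJ)
      (Submodule.smul_mono_left ((Ideal.span_singleton_le_iff_mem J).2 hx))
  exact (depth_congr e).symm ▸ depth_quotSMulTop_add_one_le hx reg

end Depth

section AssociatedPrimes

theorem injective_quotSMulTop_map_torsionBySet {A N : Type*} [CommRing A] [AddCommGroup N]
    [Module A N] (x : A) (reg : IsSMulRegular N x) (s : Set A) :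
    Function.Injective (QuotSMulTop.map x (Submodule.torsionBySet A N s).subtype) := by
  rw [injective_iff_map_eq_zero, (Submodule.mkQ_surjective _).forall]
  intro z hz
  obtain ⟨w, -, hw⟩ := (Submodule.mem_smul_pointwise_iff_exists _ _ _).1
    ((Submodule.Quotient.mk_eq_zero _).1 hz)
  have hws : w ∈ Submodule.torsionBySet A N s := by
    rw [Submodule.mem_torsionBySet_iff]
    refine fun a => reg.right_eq_zero_of_smul ?_
    rw [smul_comm, hw]
    exact (Submodule.mem_torsionBySet_iff s _).1 z.2 a
  exact (Submodule.Quotient.mk_eq_zero _).2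
    ((Submodule.mem_smul_pointwise_iff_exists _ _ _).2 ⟨⟨w, hws⟩, trivial, Subtype.ext hw⟩)

variable {A : Type*} [CommRing A] [IsNoetherianRing A]

theorem exists_associatedPrimes_quotSMulTop_gt {N : Type*} [AddCommGroup N] [Module A N]
    [Module.Finite A N] {p m : Ideal A} [m.IsPrime] (hp : p ∈ associatedPrimes A N) (hpm : p ≤ m)
    {x : A} (hx : x ∈ m) (reg : IsSMulRegular N x) :
    ∃ q ∈ associatedPrimes A (QuotSMulTop x N), p < q ∧ q ≤ m := by
  -- `U` is the submodule killed by `p`; `U / x U` embeds in `N / x N`, is supported at `m`, and is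
  -- killed by `p` and `x`, so a minimal prime of its annihilator works.
  let U := Submodule.torsionBySet A N p
  have hxp : x ∉ p := fun h =>
    (biUnion_associatedPrimes_eq_compl_regular A N).le (Set.mem_biUnion hp h) reg
  have hmU : (⟨m, ‹_›⟩ : PrimeSpectrum A) ∈ Module.support A U := by
    obtain ⟨hpp, y, rfl⟩ := isAssociatedPrime_iff.1 hp
    refine Module.mem_support_iff'.2 ⟨⟨y, ?_⟩, ?_⟩
    · simp [U, Submodule.mem_torsionBySet_iff, Submodule.mem_colon_singleton]
    · intro r hr h
      exact hr (hpm (Submodule.mem_colon_singleton.2 (congrArg Subtype.val h)))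
  have hm : Module.annihilator A (QuotSMulTop x U) ≤ m := by
    refine (Module.mem_support_iff_of_finite (p := ⟨m, ‹_›⟩)).1 ?_
    rw [Module.support_quotSMulTop]
    exact ⟨hmU, by simpa using hx⟩
  have hpU : p ≤ Module.annihilator A (QuotSMulTop x U) := fun a ha => by
    refine (Submodule.mkQ (x • (⊤ : Submodule A U))).annihilator_le_of_surjective
      (Submodule.mkQ_surjective _) (Module.mem_annihilator.2 fun z => ?_)
    exact Submodule.torsionBySet_isTorsionBySet (p : Set A) (a := ⟨a, ha⟩)
  obtain ⟨q, hq, hqm⟩ := Ideal.exists_minimalPrimes_le hm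
  have hxq : x ∈ q := hq.1.2 (QuotSMulTop.mem_annihilator _ x)
  exact ⟨q, associatedPrimes.subset_of_injective (injective_quotSMulTop_map_torsionBySet x reg p)
    (Module.associatedPrimes.minimalPrimes_annihilator_subset_associatedPrimes _ _ hq),
    lt_of_le_of_ne (hpU.trans hq.1.2) fun h => hxp (h ▸ hxq), hqm⟩

theorem length_add_height_le {m : Ideal A} [m.IsPrime] {rs : List A} (hm : ∀ r ∈ rs, r ∈ m)
    {N : Type*} [AddCommGroup N] [Module A N] [Module.Finite A N] {p : Ideal A}
    (hp : p ∈ associatedPrimes A N) (hpm : p ≤ m) (h : IsWeaklyRegular N rs) :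
    (rs.length : ℕ∞) + p.height ≤ m.height := by
  induction rs generalizing N p with
  | nil => simpa using Ideal.height_mono hpm
  | cons r rs ih =>
    obtain ⟨hr, hm⟩ := List.forall_mem_cons.1 hm
    obtain ⟨reg, h⟩ := (isWeaklyRegular_cons_iff N r rs).1 h
    obtain ⟨q, hq, hpq, hqm⟩ := exists_associatedPrimes_quotSMulTop_gt hp hpm hr reg
    have := IsAssociatedPrime.isPrime hp
    have := IsAssociatedPrime.isPrime hq
    calc ((r :: rs).length : ℕ∞) + p.height = rs.length + (p.height + 1) := by
          push_cast [List.length_cons]; ring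
      _ ≤ rs.length + q.height := by gcongr; exact Ideal.height_add_one_le_of_lt_of_isPrime hpq
      _ ≤ m.height := ih hm hq hqm h

end AssociatedPrimes

theorem depth_add_height_le {A : Type} [CommRing A] [IsNoetherianRing A] {m p : Ideal A} [m.IsPrime]
    {M : Type} [AddCommGroup M] [Module A M] [Module.Finite A M] (hp : p ∈ associatedPrimes A M)
    (hpm : p ≤ m) : depth m M + p.height ≤ m.height := by
  have := IsAssociatedPrime.isPrime hp
  have hdepth : depth m M ≤ m.height - p.height := depth_le fun rs hrs h =>
    ENat.le_sub_of_add_le_right Ideal.height_ne_top_of_isPrime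
      (length_add_height_le hrs hp hpm h.toIsWeaklyRegular)
  calc depth m M + p.height ≤ m.height - p.height + p.height := by gcongr
    _ = m.height := tsub_add_cancel_of_le (Ideal.height_mono hpm)

section Filtration

/-- The successive quotient `M_{i+1} / M_i` of a filtration `f` of `M`, where `M_i = f i`. -/
abbrev gradedPiece {A M : Type*} [CommRing A] [AddCommGroup M] [Module A M] {r : ℕ}
    (f : Fin (r + 1) → Submodule A M) (i : Fin r) : Type _ :=
  ↥(f i.succ) ⧸ Submodule.comap (f i.succ).subtype (f i.castSucc)

theorem ExtVanishesBelow.of_gradedPiece {A : Type u} [CommRing A] {J : Ideal A} {k : ℕ} {M : Type u}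
    [AddCommGroup M] [Module A M] {r : ℕ} {f : Fin (r + 1) → Submodule A M} (h0 : f 0 = ⊥)
    (hlast : f (Fin.last r) = ⊤) (hf : Monotone f)
    (h : ∀ i, ExtVanishesBelow J k (gradedPiece f i)) : ExtVanishesBelow J k M := by
  suffices hfi : ∀ i, ExtVanishesBelow J k (f i) from
    (hfi (Fin.last r)).of_linearEquiv (LinearEquiv.ofTop _ hlast)
  intro i
  induction i using Fin.induction with
  | zero =>
    rw [h0]
    exact .of_forall_smul_eq_self J.zero_mem fun _ => Subsingleton.elim _ _
  | succ i ih =>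
    refine .of_exact (Submodule.inclusion_injective (hf i.castSucc_le_succ))
      (Submodule.mkQ_surjective _) ?_ ih (h i)
    rw [LinearMap.exact_iff, Submodule.ker_mkQ, Submodule.range_inclusion]

theorem mdim_congr {A M N : Type} [CommRing A] [AddCommGroup M] [Module A M] [AddCommGroup N]
    [Module A N] (e : M ≃ₗ[A] N) : mdim A M = mdim A N := by
  rw [mdim, mdim, e.annihilator_eq]

theorem ringKrullDim_quotient_le_mdim {A M : Type} [CommRing A] [AddCommGroup M] [Module A M]
    {p : Ideal A} (hp : p ∈ associatedPrimes A M) : ringKrullDim (A ⧸ p) ≤ mdim A M :=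
  ringKrullDim_le_of_surjective
    (Ideal.Quotient.factor (Submodule.annihilator_top (R := A) (M := M) ▸
      IsAssociatedPrime.annihilator_le hp))
    (Ideal.Quotient.factor_surjective _)

variable {A : Type} [CommRing A] [IsNoetherianRing A] {M : Type} [AddCommGroup M] [Module A M]

theorem le_depth_of_forall_le_depth_gradedPiece {J : Ideal A} [Module.Finite A M]
    (htop : J • (⊤ : Submodule A M) ≠ ⊤) {r : ℕ} {f : Fin (r + 1) → Submodule A M} (h0 : f 0 = ⊥)
    (hlast : f (Fin.last r) = ⊤) (hf : Monotone f) {c : ℕ∞}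
    (h : ∀ i, c ≤ depth J (gradedPiece f i)) : c ≤ depth J M :=
  ENat.forall_natCast_le_iff_le.1 fun _ hk =>
    (ExtVanishesBelow.of_gradedPiece h0 hlast hf fun i =>
      extVanishesBelow_of_le_depth (hk.trans (h i))).le_depth htop

theorem exists_associatedPrimes_forall_ringKrullDim_le_mdim_gradedPiece [Nontrivial M] {r : ℕ}
    {f : Fin (r + 1) → Submodule A M} (h0 : f 0 = ⊥) (hlast : f (Fin.last r) = ⊤)
    (hf : StrictMono f) (hdim : StrictMono fun i => mdim A (gradedPiece f i)) :
    ∃ p ∈ associatedPrimes A M, ∀ i, ringKrullDim (A ⧸ p) ≤ mdim A (gradedPiece f i) := by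
  obtain _ | r := r
  · exact absurd (h0.symm.trans hlast) bot_ne_top
  let M₁ := f (0 : Fin (r + 1)).succ
  have : Nontrivial M₁ := Submodule.nontrivial_iff_ne_bot.2 (h0 ▸ (hf (Fin.succ_pos 0)).ne')
  have hM₁ : Submodule.comap M₁.subtype (f (0 : Fin (r + 1)).castSucc) = ⊥ := by
    rw [Fin.castSucc_zero, h0, Submodule.comap_bot, Submodule.ker_subtype]
  obtain ⟨p, hp⟩ := associatedPrimes.nonempty A M₁
  refine ⟨p, associatedPrimes.subset_of_injective M₁.subtype_injective hp, fun i => ?_⟩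
  calc ringKrullDim (A ⧸ p) ≤ mdim A M₁ := ringKrullDim_quotient_le_mdim hp
    _ = mdim A (gradedPiece f 0) := mdim_congr (Submodule.quotEquivOfEqBot _ hM₁).symm
    _ ≤ mdim A (gradedPiece f i) := hdim.monotone (Fin.zero_le i)

theorem IsSeqCMMod.exists_associatedPrimes_ringKrullDim_le_depth {n : ℕ} {K : Type} [Field K]
    {M : Type} [AddCommGroup M] [Module (MvPolynomial (Fin n) K) M]
    [Module.Finite (MvPolynomial (Fin n) K) M] (h : IsSeqCMMod n K M)
    (htop : mIdeal n K • (⊤ : Submodule (MvPolynomial (Fin n) K) M) ≠ ⊤) :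
    ∃ p ∈ associatedPrimes (MvPolynomial (Fin n) K) M,
      ringKrullDim (MvPolynomial (Fin n) K ⧸ p) ≤ depth (mIdeal n K) M := by
  obtain ⟨r, f, h0, hlast, hf, hCM, hdim⟩ := h
  have : Nontrivial M := (Submodule.nontrivial_iff _).1 (nontrivial_of_ne _ _ htop)
  obtain ⟨p, hp, hpi⟩ := exists_associatedPrimes_forall_ringKrullDim_le_mdim_gradedPiece h0 hlast hf
    fun i j => hdim i j
  have := IsAssociatedPrime.isPrime hp
  obtain ⟨c, hc⟩ := WithBot.ne_bot_iff_exists.1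
    (Order.krullDim_ne_bot_iff.2 (inferInstance : Nonempty (PrimeSpectrum (_ ⧸ p))))
  have hci i : c ≤ depth (mIdeal n K) (gradedPiece f i) :=
    WithBot.coe_le_coe.1 (hc.trans_le ((hpi i).trans (hCM i).ge))
  exact ⟨p, hp, hc.symm.trans_le (WithBot.coe_le_coe.2
    (le_depth_of_forall_le_depth_gradedPiece htop h0 hlast hf.monotone hci))⟩

end Filtration

section AssociatedPrimesOfIntersections

variable {A : Type*} [CommRing A] {ι : Type*} {P : ι → Ideal A}

theorem mem_colon_mk_quotient_iInf_iff (hP : ∀ i, (P i).IsPrime) {a y : A} :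
    a ∈ (⊥ : Submodule A (A ⧸ ⨅ i, P i)).colon {Submodule.Quotient.mk y} ↔
      ∀ i, y ∉ P i → a ∈ P i := by
  rw [Submodule.mem_colon_singleton, Submodule.mem_bot, ← Submodule.Quotient.mk_smul,
    Submodule.Quotient.mk_eq_zero, Submodule.mem_iInf]
  refine forall_congr' fun i => ?_
  rw [smul_eq_mul, (hP i).mul_mem_iff_mem_or_mem, or_iff_not_imp_right]

theorem associatedPrimes_quotient_iInf [IsNoetherianRing A] [Finite ι] (hP : ∀ i, (P i).IsPrime)
    (hanti : ∀ i j, P i ≤ P j → i = j) :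
    associatedPrimes A (A ⧸ ⨅ i, P i) = Set.range P := by
  classical
  have := Fintype.ofFinite ι
  ext p
  constructor
  · intro hp
    obtain ⟨hpp, y, hy⟩ := isAssociatedPrime_iff.1 hp
    obtain ⟨y, rfl⟩ := Submodule.Quotient.mk_surjective _ y
    have hmem a : a ∈ p ↔ ∀ i, y ∉ P i → a ∈ P i := by rw [hy, mem_colon_mk_quotient_iInf_iff hP]
    have hinf : (Finset.univ.filter (y ∉ P ·)).inf P ≤ p := fun a ha => by
      simpa [hmem, Submodule.mem_finsetInf] using ha
    obtain ⟨i, hi, hle⟩ := hpp.inf_le'.1 hinf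
    exact ⟨i, hle.antisymm fun a ha => (hmem a).1 ha i (Finset.mem_filter.1 hi).2⟩
  · rintro ⟨i, rfl⟩
    have hnot : ¬ (Finset.univ.erase i).inf P ≤ P i := fun h => by
      obtain ⟨j, hj, hle⟩ := (hP i).inf_le'.1 h
      exact Finset.ne_of_mem_erase hj (hanti j i hle)
    obtain ⟨y, hy, hyi⟩ := SetLike.not_le_iff_exists.1 hnot
    refine isAssociatedPrime_iff.2 ⟨hP i, Submodule.Quotient.mk y, ?_⟩
    ext a
    rw [mem_colon_mk_quotient_iInf_iff hP]
    refine ⟨fun ha j hj => ?_, fun h => h i hyi⟩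
    obtain rfl : j = i := by
      by_contra hji
      exact hj (Submodule.mem_finsetInf.1 hy j (Finset.mem_erase.2 ⟨hji, Finset.mem_univ j⟩))
    exact ha

end AssociatedPrimesOfIntersections

section StanleyReisner

variable {n : ℕ} {K : Type} [Field K] {Γ : Set (Finset (Fin n))}

theorem prod_X_eq_monomial (F : Finset (Fin n)) :
    (∏ i ∈ F, X i : MvPolynomial (Fin n) K) = monomial (∑ i ∈ F, Finsupp.single i 1) 1 := by
  simp only [X, monomial_sum_one]

theorem sum_single_one_le_iff {F : Finset (Fin n)} {m : Fin n →₀ ℕ} :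
    ∑ i ∈ F, Finsupp.single i 1 ≤ m ↔ F ⊆ m.support := by
  simp only [Finsupp.le_def, Finsupp.finsetSum_apply, Finsupp.single_apply, Finset.sum_ite_eq',
    Finset.subset_iff, Finsupp.mem_support_iff]
  refine forall_congr' fun i => ?_
  split_ifs with hi <;> simp [hi, Nat.one_le_iff_ne_zero]

theorem mem_SRIdeal (hΓ : IsComplex Γ) {f : MvPolynomial (Fin n) K} :
    f ∈ SRIdeal n K Γ ↔ ∀ m ∈ f.support, m.support ∉ Γ := by
  have hspan : SRIdeal n K Γ = Ideal.span ((fun s => monomial s (1 : K)) ''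
      ((fun F => ∑ i ∈ F, Finsupp.single i 1) '' Γᶜ)) := by
    rw [SRIdeal, Set.image_image]
    congr 1
    ext p
    simp only [prod_X_eq_monomial, Set.mem_ofPred_eq, Set.mem_image, Set.mem_compl_iff, eq_comm]
  rw [hspan, mem_ideal_span_monomial_image]
  refine forall₂_congr fun m _ => ?_
  simp only [Set.exists_mem_image, sum_single_one_le_iff]
  exact ⟨fun ⟨F, hF, hFm⟩ hm => hF (hΓ.2 _ hm F hFm), fun hm => ⟨_, hm, subset_rfl⟩⟩

theorem mem_facePrime {F : Finset (Fin n)} {f : MvPolynomial (Fin n) K} :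
    f ∈ facePrime n K F ↔ ∀ m ∈ f.support, ¬ m.support ⊆ F := by
  rw [facePrime, mem_ideal_span_X_image]
  refine forall₂_congr fun m _ => ?_
  simp only [Finset.not_subset, Set.mem_ofPred_eq, Finsupp.mem_support_iff, and_comm]

theorem X_mem_facePrime {F : Finset (Fin n)} {i : Fin n} :
    (X i : MvPolynomial (Fin n) K) ∈ facePrime n K F ↔ i ∉ F := by
  simp [mem_facePrime, support_X]

theorem facePrime_eq_ker (F : Finset (Fin n)) :
    facePrime n K F = RingHom.ker (killCompl (R := K) (Subtype.val_injective (p := (· ∈ F)))) := by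
  ext f
  rw [mem_facePrime, RingHom.mem_ker, MvPolynomial.ext_iff]
  simp only [coeff_killCompl, coeff_zero, mem_support_iff, not_imp_not]
  refine ⟨fun h s => h _ ?_, fun h m hm => ?_⟩
  · rw [Finsupp.mapDomain_support_of_injective Subtype.val_injective]
    simp [Finset.image_subset_iff]
  · rw [← Finsupp.mapDomain_comapDomain Subtype.val Subtype.val_injective m
      ((Finset.coe_subset.2 hm).trans Subtype.range_coe.ge)]
    exact h _

instance facePrime_isPrime (F : Finset (Fin n)) : (facePrime n K F).IsPrime :=
  facePrime_eq_ker (K := K) F ▸ RingHom.ker_isPrime _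

theorem ringKrullDim_quotient_facePrime (F : Finset (Fin n)) :
    ringKrullDim (MvPolynomial (Fin n) K ⧸ facePrime n K F) = F.card := by
  have hsurj : Function.Surjective (killCompl (R := K) (Subtype.val_injective (p := (· ∈ F)))) :=
    fun g => ⟨rename _ g, killCompl_rename_app _ g⟩
  rw [facePrime_eq_ker,
    ringKrullDim_eq_of_ringEquiv (Ideal.quotientKerAlgEquivOfSurjective hsurj).toRingEquiv,
    MvPolynomial.ringKrullDim_of_isNoetherianRing]
  simp

theorem facePrime_le_facePrime_iff {F G : Finset (Fin n)} :
    facePrime n K F ≤ facePrime n K G ↔ G ⊆ F := by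
  refine ⟨fun h i hi => ?_, fun h => Ideal.span_mono (Set.image_mono fun i hi hG => hi (h hG))⟩
  by_contra hF
  exact X_mem_facePrime.1 (h (X_mem_facePrime (K := K).2 hF)) hi

theorem facePrime_empty : facePrime n K ∅ = mIdeal n K := by
  simp [facePrime, mIdeal]

instance mIdeal_isPrime : (mIdeal n K).IsPrime :=
  facePrime_empty (K := K) ▸ facePrime_isPrime ∅

theorem facePrime_le_mIdeal (F : Finset (Fin n)) : facePrime n K F ≤ mIdeal n K :=
  facePrime_empty (K := K) ▸ facePrime_le_facePrime_iff.2 F.empty_subset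

theorem height_facePrime_compl (S : Finset (Fin n)) : (facePrime n K Sᶜ).height = S.card := by
  apply le_antisymm
  · have himage : {i | i ∉ Sᶜ} = (S : Set (Fin n)) := by ext; simp
    calc (facePrime n K Sᶜ).height
        ≤ ((fun i => (X i : MvPolynomial (Fin n) K)) '' {i | i ∉ Sᶜ}).ncard :=
          Ideal.height_le_card_of_mem_minimalPrimes_span (Set.toFinite _)
            (Ideal.minimalPrimes_eq_subsingleton_self (I := facePrime n K Sᶜ) ▸ rfl)
      _ ≤ S.card := by
          rw [himage, ← Set.ncard_coe_finset]
          exact_mod_cast Set.ncard_image_le S.finite_toSet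
  · induction S using Finset.induction_on with
    | empty => simp
    | insert a S ha ih =>
      have hlt : facePrime n K Sᶜ < facePrime n K (insert a S)ᶜ := by
        rw [lt_iff_le_not_ge, facePrime_le_facePrime_iff, facePrime_le_facePrime_iff,
          Finset.compl_subset_compl, Finset.compl_subset_compl, Finset.insert_subset_iff]
        exact ⟨Finset.subset_insert a S, fun h => ha h.1⟩
      calc ((insert a S).card : ℕ∞) = S.card + 1 := by simp [Finset.card_insert_of_notMem ha]
        _ ≤ (facePrime n K Sᶜ).height + 1 := by gcongr
        _ ≤ _ := Ideal.height_add_one_le_of_lt_of_isPrime hlt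

theorem height_facePrime (F : Finset (Fin n)) : (facePrime n K F).height = n - F.card := by
  have := height_facePrime_compl (K := K) Fᶜ
  rwa [compl_compl, Finset.card_compl, Fintype.card_fin, ENat.natCast_sub] at this

theorem sub_height_facePrime (F : Finset (Fin n)) :
    (n : ℕ∞) - (facePrime n K F).height = F.card := by
  rw [height_facePrime]
  exact_mod_cast Nat.sub_sub_self (card_finset_fin_le F)

theorem height_mIdeal : (mIdeal n K).height = n := by
  rw [← facePrime_empty, height_facePrime, Finset.card_empty, Nat.cast_zero, tsub_zero]

theorem exists_isFacet_superset {F : Finset (Fin n)} (hF : F ∈ Γ) : ∃ G, IsFacet Γ G ∧ F ⊆ G := by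
  obtain ⟨G, hFG, hG⟩ := (Set.toFinite Γ).exists_le_maximal hF
  exact ⟨G, ⟨hG.prop, fun H hH hGH => le_antisymm (hG.le_of_ge hH hGH) hGH⟩, hFG⟩

theorem SRIdeal_eq_iInf_facePrime (hΓ : IsComplex Γ) :
    SRIdeal n K Γ = ⨅ F : {F // IsFacet Γ F}, facePrime n K F.1 := by
  ext f
  simp only [mem_SRIdeal hΓ, Submodule.mem_iInf, mem_facePrime, Subtype.forall]
  constructor
  · exact fun h F hF m hm hs => h m hm (hΓ.2 F hF.1 _ hs)
  · intro h m hm hs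
    obtain ⟨G, hG, hsub⟩ := exists_isFacet_superset hs
    exact h G hG m hm hsub

theorem associatedPrimes_SRIdeal (hΓ : IsComplex Γ) :
    associatedPrimes _ (MvPolynomial (Fin n) K ⧸ SRIdeal n K Γ) =
      Set.range fun F : {F // IsFacet Γ F} => facePrime n K F.1 := by
  rw [SRIdeal_eq_iInf_facePrime hΓ]
  exact associatedPrimes_quotient_iInf (fun F => facePrime_isPrime F.1) fun F G h =>
    Subtype.ext (G.2.2 _ F.2.1 (facePrime_le_facePrime_iff.1 h))

theorem nonempty_isFacet (hΓ : IsComplex Γ) : Nonempty {F // IsFacet Γ F} :=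
  have ⟨_, hF⟩ := hΓ.1
  have ⟨G, hG, _⟩ := exists_isFacet_superset hF
  ⟨⟨G, hG⟩⟩

theorem sub_bigh_SRIdeal (hΓ : IsComplex Γ) :
    (n : ℕ∞) - bigh (SRIdeal n K Γ) = ⨅ F : {F // IsFacet Γ F}, (F.1.card : ℕ∞) := by
  have := nonempty_isFacet hΓ
  rw [bigh, associatedPrimes_SRIdeal hΓ, iSup_range, ENat.sub_iSup (ENat.natCast_ne_top n)]
  simp only [htP_eq_height, sub_height_facePrime]

theorem SRIdeal_le_mIdeal (hΓ : IsComplex Γ) : SRIdeal n K Γ ≤ mIdeal n K := by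
  obtain ⟨F⟩ := nonempty_isFacet hΓ
  exact SRIdeal_eq_iInf_facePrime (K := K) hΓ ▸ iInf_le_of_le F (facePrime_le_mIdeal F.1)

theorem depth_le_sub_bigh (hΓ : IsComplex Γ) :
    depth (mIdeal n K) (MvPolynomial (Fin n) K ⧸ SRIdeal n K Γ) ≤ n - bigh (SRIdeal n K Γ) := by
  rw [sub_bigh_SRIdeal hΓ]
  refine le_iInf fun F => ?_
  have hF : facePrime n K F.1 ∈ associatedPrimes _ (MvPolynomial (Fin n) K ⧸ SRIdeal n K Γ) :=
    (associatedPrimes_SRIdeal hΓ).superset (Set.mem_range_self F)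
  rw [← sub_height_facePrime (K := K) F.1, ← height_mIdeal (K := K)]
  exact ENat.le_sub_of_add_le_right Ideal.height_ne_top_of_isPrime
    (depth_add_height_le hF (facePrime_le_mIdeal F.1))

theorem depth_eq_sub_bigh_of_isSeqCMMod (hΓ : IsComplex Γ)
    (h : IsSeqCMMod n K (MvPolynomial (Fin n) K ⧸ SRIdeal n K Γ)) :
    depth (mIdeal n K) (MvPolynomial (Fin n) K ⧸ SRIdeal n K Γ) = n - bigh (SRIdeal n K Γ) := by
  obtain ⟨p, hp, hdepth⟩ := h.exists_associatedPrimes_ringKrullDim_le_depth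
    (smul_top_quotient_ne_top (SRIdeal_le_mIdeal hΓ) mIdeal_isPrime.ne_top)
  obtain ⟨F, rfl⟩ := (associatedPrimes_SRIdeal hΓ).subset hp
  rw [ringKrullDim_quotient_facePrime] at hdepth
  refine (depth_le_sub_bigh hΓ).antisymm ?_
  rw [sub_bigh_SRIdeal hΓ]
  exact iInf_le_of_le F (WithBot.coe_le_coe.1 hdepth)

end StanleyReisner

section StarLinkDeletion

variable {n : ℕ} {K : Type} [Field K] {Δ : Set (Finset (Fin n))} {v : Fin n}

/-- The closed star of the vertex `v` in `Δ`: the faces whose union with `{v}` is again a face. -/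
def starC (Δ : Set (Finset (Fin n))) (v : Fin n) : Set (Finset (Fin n)) :=
  {F | insert v F ∈ Δ}

theorem isComplex_starC (hΔ : IsComplex Δ) (hv : {v} ∈ Δ) : IsComplex (starC Δ v) :=
  ⟨⟨∅, by simpa [starC] using hv⟩, fun _ hF _ hG => hΔ.2 _ hF _ (Finset.insert_subset_insert v hG)⟩

theorem isComplex_delC (hΔ : IsComplex Δ) (v : Fin n) : IsComplex (delC Δ v) :=
  have ⟨_, hF⟩ := hΔ.1
  ⟨⟨∅, hΔ.2 _ hF _ (Finset.empty_subset _), Finset.notMem_empty v⟩,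
    fun _ hF _ hG => ⟨hΔ.2 _ hF.1 _ hG, fun hv => hF.2 (hG hv)⟩⟩

theorem delC_starC (hΔ : IsComplex Δ) (v : Fin n) : delC (starC Δ v) v = linkC Δ v := by
  ext F
  exact ⟨fun ⟨h, hv⟩ => ⟨hΔ.2 _ h _ (Finset.subset_insert v F), hv, h⟩, fun ⟨_, hv, h⟩ => ⟨h, hv⟩⟩

theorem isComplex_linkC (hΔ : IsComplex Δ) (hv : {v} ∈ Δ) : IsComplex (linkC Δ v) :=
  delC_starC hΔ v ▸ isComplex_delC (isComplex_starC hΔ hv) v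

theorem starC_starC (Δ : Set (Finset (Fin n))) (v : Fin n) : starC (starC Δ v) v = starC Δ v := by
  simp [starC]

theorem SRIdeal_add_span_X (Δ : Set (Finset (Fin n))) (v : Fin n) :
    SRIdeal n K Δ + Ideal.span {(X v : MvPolynomial (Fin n) K)} = SRIdeal n K (delC Δ v) := by
  apply le_antisymm
  · refine sup_le (Ideal.span_mono fun _ ⟨F, hF, h⟩ => ⟨F, fun h' => hF h'.1, h⟩) ?_
    rw [Ideal.span_singleton_le_iff_mem]
    exact Ideal.subset_span ⟨{v}, fun h => h.2 (Finset.mem_singleton_self v), by simp⟩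
  · refine Ideal.span_le.2 ?_
    rintro _ ⟨F, hF, rfl⟩
    by_cases hv : v ∈ F
    · exact Submodule.mem_sup_right (Ideal.mem_span_singleton.2 (Finset.dvd_prod_of_mem _ hv))
    · exact Submodule.mem_sup_left (Ideal.subset_span ⟨F, fun h => hF ⟨h, hv⟩, rfl⟩)

theorem X_mul_mem_SRIdeal_iff (hΔ : IsComplex Δ) (hv : {v} ∈ Δ) {a : MvPolynomial (Fin n) K} :
    X v * a ∈ SRIdeal n K Δ ↔ a ∈ SRIdeal n K (starC Δ v) := by
  have hsupport (m : Fin n →₀ ℕ) : (Finsupp.single v 1 + m).support = insert v m.support := by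
    ext i
    by_cases hi : i = v <;> simp [hi, Ne.symm]
  rw [mem_SRIdeal hΔ, mem_SRIdeal (isComplex_starC hΔ hv), support_X_mul]
  simp [hsupport, starC]

theorem colon_span_X (hΔ : IsComplex Δ) (hv : {v} ∈ Δ) :
    (SRIdeal n K Δ).colon (Ideal.span {(X v : MvPolynomial (Fin n) K)}) =
      SRIdeal n K (starC Δ v) := by
  ext a
  rw [Ideal.mem_colon_span_singleton, mul_comm, X_mul_mem_SRIdeal_iff hΔ hv]

theorem isFacet_starC_insert (hΔ : IsComplex Δ) {F : Finset (Fin n)}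
    (hF : IsFacet (linkC Δ v) F) : IsFacet (starC Δ v) (insert v F) := by
  refine ⟨by simpa [starC] using hF.1.2.2, fun G hG hFG => ?_⟩
  have hvG : v ∈ G := hFG (Finset.mem_insert_self v F)
  have herase : G.erase v ∈ linkC Δ v := by
    rw [← delC_starC hΔ]
    refine ⟨?_, Finset.notMem_erase v G⟩
    rwa [starC, Set.mem_ofPred_eq, Finset.insert_erase hvG, ← Finset.insert_eq_of_mem hvG]
  rw [← hF.2 _ herase (Finset.subset_erase.2 ⟨(Finset.subset_insert v F).trans hFG, hF.1.2.1⟩),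
    Finset.insert_erase hvG]

theorem IsFacet.mem_of_starC {F : Finset (Fin n)} (hF : IsFacet (starC Δ v) F) : v ∈ F :=
  Finset.insert_eq_self.1 (hF.2 _ (by simpa [starC] using hF.1) (Finset.subset_insert v F))

theorem isFacet_iff_of_isSheddingVertex (hΔ : IsComplex Δ) (hv : IsSheddingVertex Δ v)
    (F : Finset (Fin n)) : IsFacet Δ F ↔ IsFacet (starC Δ v) F ∨ IsFacet (delC Δ v) F := by
  have hstar {G : Finset (Fin n)} (hG : G ∈ starC Δ v) : G ∈ Δ :=
    hΔ.2 _ hG _ (Finset.subset_insert v G)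
  have hmem {G : Finset (Fin n)} (hvG : v ∈ G) (hG : G ∈ Δ) : G ∈ starC Δ v := by
    rwa [starC, Set.mem_ofPred_eq, Finset.insert_eq_of_mem hvG]
  constructor
  · intro hF
    by_cases hvF : v ∈ F
    · exact .inl ⟨hmem hvF hF.1, fun G hG => hF.2 G (hstar hG)⟩
    · exact .inr ⟨⟨hF.1, hvF⟩, fun G hG => hF.2 G hG.1⟩
  · rintro (hF | hF)
    · exact ⟨hstar hF.1, fun G hG hFG => hF.2 G (hmem (hFG hF.mem_of_starC) hG) hFG⟩
    · exact hv.2 F hF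

theorem sub_bigh_SRIdeal_starC_le (hΔ : IsComplex Δ) (hv : {v} ∈ Δ) :
    (n : ℕ∞) - bigh (SRIdeal n K (starC Δ v)) ≤ n - bigh (SRIdeal n K (linkC Δ v)) + 1 := by
  rw [sub_bigh_SRIdeal (isComplex_starC hΔ hv), sub_bigh_SRIdeal (isComplex_linkC hΔ hv),
    ENat.iInf_add]
  refine le_iInf fun F => iInf_le_of_le ⟨_, isFacet_starC_insert hΔ F.2⟩ ?_
  rw [Finset.card_insert_of_notMem F.2.1.2.1, Nat.cast_add_one]

theorem sub_bigh_SRIdeal_eq_min (hΔ : IsComplex Δ) (hv : IsSheddingVertex Δ v) :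
    (n : ℕ∞) - bigh (SRIdeal n K Δ) =
      min (n - bigh (SRIdeal n K (starC Δ v))) (n - bigh (SRIdeal n K (delC Δ v))) := by
  rw [sub_bigh_SRIdeal hΔ, sub_bigh_SRIdeal (isComplex_starC hΔ hv.1),
    sub_bigh_SRIdeal (isComplex_delC hΔ v)]
  simp only [iInf_subtype, isFacet_iff_of_isSheddingVertex hΔ hv, iInf_or, iInf_inf_eq]

theorem depth_starC_eq_sub_bigh (hΔ : IsComplex Δ) (hv : {v} ∈ Δ)
    (hlink : depth (mIdeal n K) (MvPolynomial (Fin n) K ⧸ SRIdeal n K (linkC Δ v)) =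
      n - bigh (SRIdeal n K (linkC Δ v))) :
    depth (mIdeal n K) (MvPolynomial (Fin n) K ⧸ SRIdeal n K (starC Δ v)) =
      n - bigh (SRIdeal n K (starC Δ v)) := by
  have hstar := isComplex_starC hΔ hv
  have reg : IsSMulRegular (MvPolynomial (Fin n) K ⧸ SRIdeal n K (starC Δ v))
      (X v : MvPolynomial (Fin n) K) := isSMulRegular_quotient_iff.2 fun a ha => by
    rwa [X_mul_mem_SRIdeal_iff hstar (by simpa [starC] using hv), starC_starC] at ha
  refine (depth_le_sub_bigh hstar).antisymm ?_
  calc (n : ℕ∞) - bigh (SRIdeal n K (starC Δ v))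
      ≤ n - bigh (SRIdeal n K (linkC Δ v)) + 1 := sub_bigh_SRIdeal_starC_le hΔ hv
    _ = depth (mIdeal n K) (MvPolynomial (Fin n) K ⧸
          (SRIdeal n K (starC Δ v) + Ideal.span {X v})) + 1 := by
        rw [SRIdeal_add_span_X, delC_starC hΔ, hlink]
    _ ≤ depth (mIdeal n K) (MvPolynomial (Fin n) K ⧸ SRIdeal n K (starC Δ v)) :=
        depth_quotient_add_span_add_one_le (Ideal.subset_span ⟨v, rfl⟩) reg
          (SRIdeal_le_mIdeal hstar) mIdeal_isPrime.ne_top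

end StarLinkDeletion

theorem statement_3_general {n : ℕ} {K : Type} [Field K] {Δ : Set (Finset (Fin n))}
    (hΔ : IsComplex Δ) {v : Fin n} (hv : IsSheddingVertex Δ v)
    (hlink : depth (mIdeal n K) (MvPolynomial (Fin n) K ⧸ SRIdeal n K (linkC Δ v)) =
      n - bigh (SRIdeal n K (linkC Δ v)))
    (hdel : depth (mIdeal n K) (MvPolynomial (Fin n) K ⧸ SRIdeal n K (delC Δ v)) =
      n - bigh (SRIdeal n K (delC Δ v))) :
    depth (mIdeal n K) (MvPolynomial (Fin n) K ⧸ SRIdeal n K Δ) =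
        min (depth (mIdeal n K) (MvPolynomial (Fin n) K ⧸
            (SRIdeal n K Δ).colon (Ideal.span {(X v : MvPolynomial (Fin n) K)})))
          (depth (mIdeal n K) (MvPolynomial (Fin n) K ⧸
            (SRIdeal n K Δ + Ideal.span {(X v : MvPolynomial (Fin n) K)}))) ∧
      depth (mIdeal n K) (MvPolynomial (Fin n) K ⧸ SRIdeal n K Δ) =
        (n : ℕ∞) - bigh (SRIdeal n K Δ) := by
  have hmin := min_depth_colon_le (X v) (SRIdeal_le_mIdeal (K := K) hΔ) mIdeal_isPrime.ne_top
  have hle := depth_le_sub_bigh (K := K) hΔ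
  rw [colon_span_X hΔ hv.1, SRIdeal_add_span_X, depth_starC_eq_sub_bigh hΔ hv.1 hlink, hdel,
    ← sub_bigh_SRIdeal_eq_min hΔ hv] at hmin ⊢
  exact ⟨hle.antisymm hmin, hle.antisymm hmin⟩

/-- If `Δ` has a shedding vertex `v` with `link_Δ(v)` and `del_Δ(v)` sequentially
Cohen-Macaulay, then
`depth R/I_Δ = min {depth R/(I_Δ : x_v), depth R/(I_Δ, x_v)} = n - bigh(I_Δ)`. -/
theorem statement_3 (n : ℕ) (K : Type) [Field K] (Δ : Set (Finset (Fin n)))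
    (hΔ : IsComplex Δ) (hvert : ∀ u : Fin n, {u} ∈ Δ) (v : Fin n)
    (hv : IsSheddingVertex Δ v)
    (hlink : IsSeqCMMod n K (MvPolynomial (Fin n) K ⧸ SRIdeal n K (linkC Δ v)))
    (hdel : IsSeqCMMod n K (MvPolynomial (Fin n) K ⧸ SRIdeal n K (delC Δ v))) :
    depth (mIdeal n K) (MvPolynomial (Fin n) K ⧸ SRIdeal n K Δ) =
        min (depth (mIdeal n K)
              (MvPolynomial (Fin n) K ⧸ (SRIdeal n K Δ).colon (Ideal.span {(X v : MvPolynomial (Fin n) K)})))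
          (depth (mIdeal n K)
              (MvPolynomial (Fin n) K ⧸ (SRIdeal n K Δ + Ideal.span {(X v : MvPolynomial (Fin n) K)}))) ∧
    depth (mIdeal n K) (MvPolynomial (Fin n) K ⧸ SRIdeal n K Δ) =
        (n : ℕ∞) - bigh (SRIdeal n K Δ) :=
  statement_3_general hΔ hv
    (depth_eq_sub_bigh_of_isSeqCMMod (isComplex_linkC hΔ hv.1) hlink)
    (depth_eq_sub_bigh_of_isSeqCMMod (isComplex_delC hΔ v) hdel)

end Paper
end

section
/- Let I be a squarefree monomial ideal in R = K[x_1,…,x_n] and suppose x_i^k (with x_i ∉ √I, k ≥ 1) satisfies ass(I + (x_i^k)) = {𝔭 ∈ ass(I) : x_i ∈ 𝔭}, and suppose there exists a minimal prime 𝔭 of I with x_i ∉ 𝔭. Then there exists a minimal prime 𝔮 of I with x_i ∈ 𝔮 and 𝔮 ⊆ 𝔭 + (x_i^k), and consequently k = 1. -/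
open MvPolynomial

namespace Paper

/-- A monomial ideal: an ideal generated by monomials. -/
def IsMonomialIdeal {n : ℕ} {K : Type} [Field K] (I : Ideal (MvPolynomial (Fin n) K)) : Prop :=
  ∃ S : Set (Fin n →₀ ℕ), I = Ideal.span ((fun a => monomial a (1 : K)) '' S)

/-- A squarefree monomial ideal: an ideal generated by squarefree monomials. -/
def IsSquarefreeMonomialIdeal {n : ℕ} {K : Type} [Field K]
    (I : Ideal (MvPolynomial (Fin n) K)) : Prop :=
  ∃ S : Set (Fin n →₀ ℕ), (∀ a ∈ S, ∀ i, a i ≤ 1) ∧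
    I = Ideal.span ((fun a => monomial a (1 : K)) '' S)

/-- An ideal `I` is unmixed if `dim A/I = dim A/𝔭` for every associated prime `𝔭` of `I`. -/
def IsUnmixed {A : Type} [CommRing A] (I : Ideal A) : Prop :=
  ∀ 𝔭 ∈ associatedPrimes A (A ⧸ I), ringKrullDim (A ⧸ I) = ringKrullDim (A ⧸ 𝔭)

/-- ass-decomposable ideals: `I` is ass-decomposable if it is primary, or there are a
variable `x_i ∉ √I` and `k ≥ 1` with `ass(I + (x_i^k)) = {𝔭 ∈ ass(I) : x_i ∈ 𝔭}` such
that `I + (x_i^k)` and `I : x_i^k` are both ass-decomposable. -/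
inductive IsAssDecomposable {n : ℕ} {K : Type} [Field K] :
    Ideal (MvPolynomial (Fin n) K) → Prop
  | primary {I : Ideal (MvPolynomial (Fin n) K)} (h : I.IsPrimary) : IsAssDecomposable I
  | step {I : Ideal (MvPolynomial (Fin n) K)} (i : Fin n) (k : ℕ) (hk : 1 ≤ k)
      (hx : X i ∉ I.radical)
      (hass : associatedPrimes (MvPolynomial (Fin n) K)
          (MvPolynomial (Fin n) K ⧸ (I + Ideal.span {(X i : MvPolynomial (Fin n) K) ^ k})) =
        {𝔭 ∈ associatedPrimes (MvPolynomial (Fin n) K) (MvPolynomial (Fin n) K ⧸ I) |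
          (X i : MvPolynomial (Fin n) K) ∈ 𝔭})
      (h1 : IsAssDecomposable (I + Ideal.span {(X i : MvPolynomial (Fin n) K) ^ k}))
      (h2 : IsAssDecomposable (I.colon (Ideal.span {(X i : MvPolynomial (Fin n) K) ^ k}))) :
      IsAssDecomposable I

/-!
Let `I` be radical and `J = I + (x ^ k)` with `ass(J) ⊆ ass(I)`. Since `I` is radical, every
`𝔮 ∈ ass(I)` satisfies `g𝔮 ⊆ I` for some `g ∉ 𝔮`; hence `𝔮` is minimal over `I`, and `J` is reduced
at each of its associated primes, which forces `J` itself to be radical. Therefore `x ∈ J`, and for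
a prime `𝔭 ⊇ I` with `x ∉ 𝔭` this gives `1 ∈ 𝔭 + (x ^ (k - 1))`, impossible for `k ≥ 2` if `𝔭 + (x)`
is proper. If moreover `𝔭 + (x)` is prime, then any minimal prime of `J` below it is the desired
`𝔮`. Minimal primes of monomial ideals are generated by variables, so for these `𝔭 + (x_i)` is
indeed prime.
-/

section CommutativeAlgebra

variable {A : Type*} [CommRing A] {I J 𝔭 𝔮 : Ideal A}

lemma le_of_mem_associatedPrimes_quotient (h𝔮 : 𝔮 ∈ associatedPrimes A (A ⧸ I)) : I ≤ 𝔮 := by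
  simpa only [Submodule.annihilator_top, Ideal.annihilator_quotient] using
    IsAssociatedPrime.annihilator_le h𝔮

lemma exists_forall_mul_mem_of_mem_associatedPrimes (hI : I.IsRadical)
    (h𝔮 : 𝔮 ∈ associatedPrimes A (A ⧸ I)) : ∃ g ∉ 𝔮, ∀ f ∈ 𝔮, f * g ∈ I := by
  obtain ⟨h𝔮prime, y, hy⟩ := h𝔮
  obtain ⟨g, rfl⟩ := Ideal.Quotient.mk_surjective y
  have mem_iff (f : A) : f ∈ 𝔮 ↔ ∃ m : ℕ, f ^ m * g ∈ I := by
    simp only [hy, Ideal.mem_radical_iff, Submodule.mem_colon_singleton, Submodule.mem_bot]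
    exact exists_congr fun m ↦ Ideal.Quotient.eq_zero_iff_mem
  refine ⟨g, fun hg ↦ h𝔮prime.one_notMem ?_, fun f hf ↦ ?_⟩
  · obtain ⟨m, hm⟩ := (mem_iff g).1 hg
    have hgI : g ∈ I := hI ⟨m + 1, by rwa [pow_succ]⟩
    exact (mem_iff 1).2 ⟨0, by simpa using hgI⟩
  · obtain ⟨m, hm⟩ := (mem_iff f).1 hf
    refine hI ⟨m + 1, ?_⟩
    rw [show (f * g) ^ (m + 1) = f * g ^ m * (f ^ m * g) by ring]
    exact I.mul_mem_left _ hm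

lemma associatedPrimes_subset_minimalPrimes (hI : I.IsRadical) :
    associatedPrimes A (A ⧸ I) ⊆ I.minimalPrimes := by
  intro 𝔮 h𝔮
  obtain ⟨g, hg, hmul⟩ := exists_forall_mul_mem_of_mem_associatedPrimes hI h𝔮
  refine ⟨⟨h𝔮.isPrime, le_of_mem_associatedPrimes_quotient h𝔮⟩, fun 𝔯 ⟨h𝔯, hI𝔯⟩ h𝔯𝔮 f hf ↦ ?_⟩
  exact (h𝔯.mem_or_mem (hI𝔯 (hmul f hf))).resolve_right fun hg𝔯 ↦ hg (h𝔯𝔮 hg𝔯)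

lemma isRadical_of_associatedPrimes_subset [IsNoetherianRing A] (hI : I.IsRadical) (hIJ : I ≤ J)
    (hass : associatedPrimes A (A ⧸ J) ⊆ associatedPrimes A (A ⧸ I)) : J.IsRadical := by
  intro f hf
  by_contra hfJ
  obtain ⟨𝔮, h𝔮, hcolon⟩ := exists_le_isAssociatedPrime_of_isNoetherianRing A
    (Ideal.Quotient.mk J f) (mt Ideal.Quotient.eq_zero_iff_mem.1 hfJ)
  have hf𝔮 : f ∈ 𝔮 :=
    h𝔮.isPrime.isRadical.radical_le_iff.2 (le_of_mem_associatedPrimes_quotient h𝔮) hf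
  obtain ⟨g, hg, hmul⟩ := exists_forall_mul_mem_of_mem_associatedPrimes hI (hass h𝔮)
  have hgf : g * f ∈ J := mul_comm f g ▸ hIJ (hmul f hf𝔮)
  exact hg (hcolon (Submodule.mem_colon_singleton.2 (Ideal.Quotient.eq_zero_iff_mem.2 hgf)))

lemma eq_one_of_mem_sup_span_singleton_pow {x : A} (h𝔭 : 𝔭.IsPrime) (hx : x ∉ 𝔭)
    (hproper : 𝔭 ⊔ Ideal.span {x} ≠ ⊤) {k : ℕ} (hk : 1 ≤ k)
    (hmem : x ∈ 𝔭 ⊔ Ideal.span {x ^ k}) : k = 1 := by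
  by_contra hk1
  obtain ⟨m, rfl⟩ : ∃ m, k = m + 2 := ⟨k - 2, by omega⟩
  rw [sup_comm, Ideal.mem_span_singleton_sup] at hmem
  obtain ⟨r, p, hp, hrp⟩ := hmem
  have hmul : x * (1 - r * x ^ (m + 1)) ∈ 𝔭 := by
    rwa [show x * (1 - r * x ^ (m + 1)) = p by linear_combination -hrp]
  have hsub : 1 - r * x ^ (m + 1) ∈ 𝔭 := (h𝔭.mem_or_mem hmul).resolve_left hx
  refine hproper ((Ideal.eq_top_iff_one _).2 ?_)
  rw [sup_comm, Ideal.mem_span_singleton_sup]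
  exact ⟨r * x ^ m, _, hsub, by ring⟩

theorem statement_6_general [IsNoetherianRing A] (hI : I.IsRadical) {x : A} {k : ℕ} (hk : 1 ≤ k)
    (hass : associatedPrimes A (A ⧸ (I ⊔ Ideal.span {x ^ k})) ⊆ associatedPrimes A (A ⧸ I))
    (h𝔭 : 𝔭.IsPrime) (hI𝔭 : I ≤ 𝔭) (hx𝔭 : x ∉ 𝔭) (h𝔭x : (𝔭 ⊔ Ideal.span {x}).IsPrime) :
    (∃ 𝔮 ∈ I.minimalPrimes, x ∈ 𝔮 ∧ 𝔮 ≤ 𝔭 ⊔ Ideal.span {x ^ k}) ∧ k = 1 := by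
  have hJ : (I ⊔ Ideal.span {x ^ k}).IsRadical :=
    isRadical_of_associatedPrimes_subset hI le_sup_left hass
  have hxJ : x ∈ I ⊔ Ideal.span {x ^ k} :=
    hJ ⟨k, Ideal.mem_sup_right (Ideal.mem_span_singleton_self _)⟩
  obtain rfl : k = 1 :=
    eq_one_of_mem_sup_span_singleton_pow h𝔭 hx𝔭 h𝔭x.ne_top hk (sup_le_sup_right hI𝔭 _ hxJ)
  rw [pow_one] at hass hxJ ⊢
  obtain ⟨𝔮, h𝔮, h𝔮le⟩ := Ideal.exists_minimalPrimes_le (sup_le_sup_right hI𝔭 (Ideal.span {x}))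
  have h𝔮ass : 𝔮 ∈ associatedPrimes A (A ⧸ (I ⊔ Ideal.span {x})) :=
    Module.associatedPrimes.minimalPrimes_annihilator_subset_associatedPrimes A _
      (by rwa [Ideal.annihilator_quotient])
  exact ⟨⟨𝔮, associatedPrimes_subset_minimalPrimes hI (hass h𝔮ass), h𝔮.1.2 hxJ, h𝔮le⟩, rfl⟩

end CommutativeAlgebra

section CommSemiring

variable {σ R : Type*} [CommSemiring R]

lemma exists_X_mem_of_monomial_mem {𝔭 : Ideal (MvPolynomial σ R)} [h𝔭 : 𝔭.IsPrime] {a : σ →₀ ℕ}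
    (ha : monomial a 1 ∈ 𝔭) : ∃ j, X j ∈ 𝔭 ∧ a j ≠ 0 := by
  rw [monomial_eq, C_1, one_mul, Finsupp.prod, h𝔭.prod_mem_iff] at ha
  obtain ⟨j, hj, hXj⟩ := ha
  exact ⟨j, h𝔭.mem_of_pow_mem _ hXj, Finsupp.mem_support_iff.1 hj⟩

lemma span_monomial_image_le_span_X_image {S : Set (σ →₀ ℕ)} {s : Set σ}
    (h : ∀ a ∈ S, ∃ j ∈ s, a j ≠ 0) :
    Ideal.span ((fun a ↦ monomial a (1 : R)) '' S) ≤ Ideal.span (X '' s) := by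
  classical
  rw [Ideal.span_le]
  rintro _ ⟨a, ha, rfl⟩
  refine mem_ideal_span_X_image.2 fun m hm ↦ ?_
  rw [Finset.mem_singleton.1 (support_monomial_subset hm)]
  exact h a ha

end CommSemiring

section CommRing

variable {σ R : Type*} [CommRing R]

lemma span_X_image_eq_ker_aeval (s : Set σ) :
    Ideal.span (X '' s : Set (MvPolynomial σ R)) =
      RingHom.ker (aeval (sᶜ.indicator X) : MvPolynomial σ R →ₐ[R] MvPolynomial σ R) := by
  refine le_antisymm (Ideal.span_le.2 ?_) fun f hf ↦ ?_
  · rintro _ ⟨j, hj, rfl⟩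
    simp [RingHom.mem_ker, hj]
  set P := Ideal.span (X '' s : Set (MvPolynomial σ R))
  have hcomp : (Ideal.Quotient.mkₐ R P).comp (aeval (sᶜ.indicator X)) =
      Ideal.Quotient.mkₐ R P := by
    ext j
    by_cases hj : j ∈ s
    · have hXj : Ideal.Quotient.mk P (X j) = 0 :=
        Ideal.Quotient.eq_zero_iff_mem.2 (Ideal.subset_span (Set.mem_image_of_mem X hj))
      simp [hj, hXj]
    · simp [hj]
  have hfP := DFunLike.congr_fun hcomp f
  rw [AlgHom.comp_apply, RingHom.mem_ker.1 hf, map_zero] at hfP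
  exact Ideal.Quotient.eq_zero_iff_mem.1 hfP.symm

lemma isPrime_span_X_image [IsDomain R] (s : Set σ) :
    (Ideal.span (X '' s : Set (MvPolynomial σ R))).IsPrime :=
  span_X_image_eq_ker_aeval (R := R) s ▸ RingHom.ker_isPrime _

lemma isRadical_span_X_image [IsReduced R] (s : Set σ) :
    (Ideal.span (X '' s : Set (MvPolynomial σ R))).IsRadical := by
  rw [span_X_image_eq_ker_aeval]
  rintro f ⟨m, hm⟩
  rw [RingHom.mem_ker, map_pow] at hm
  exact eq_zero_of_pow_eq_zero hm

lemma isRadical_span_monomial_image [IsReduced R] {S : Set (σ →₀ ℕ)}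
    (hS : ∀ a ∈ S, ∀ j, a j ≤ 1) :
    (Ideal.span ((fun a ↦ monomial a (1 : R)) '' S)).IsRadical := by
  intro f hf
  rw [mem_ideal_span_monomial_image]
  by_contra! ⟨m, hm, hmS⟩
  -- A squarefree monomial not dividing `X ^ m` involves a variable outside the support of `m`.
  have hle : Ideal.span ((fun a ↦ monomial a (1 : R)) '' S) ≤ Ideal.span (X '' {j | m j = 0}) := by
    refine span_monomial_image_le_span_X_image fun a ha ↦ ?_
    obtain ⟨j, hj⟩ : ∃ j, m j < a j := by simpa [Finsupp.le_def] using hmS a ha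
    have := hS a ha j
    exact ⟨j, show m j = 0 by omega, by omega⟩
  have hfX := (isRadical_span_X_image _).radical_le_iff.2 hle hf
  obtain ⟨j, hj, hmj⟩ := mem_ideal_span_X_image.1 hfX m hm
  exact hmj hj

lemma eq_span_X_image_of_mem_minimalPrimes [IsDomain R] {S : Set (σ →₀ ℕ)}
    {𝔭 : Ideal (MvPolynomial σ R)}
    (h𝔭 : 𝔭 ∈ (Ideal.span ((fun a ↦ monomial a (1 : R)) '' S)).minimalPrimes) :
    𝔭 = Ideal.span (X '' {j | X j ∈ 𝔭}) := by
  have := h𝔭.1.1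
  have hle : Ideal.span (X '' {j | X j ∈ 𝔭}) ≤ 𝔭 :=
    Ideal.span_le.2 (Set.image_subset_iff.2 fun _ ↦ id)
  refine le_antisymm (h𝔭.2 ⟨isPrime_span_X_image _, ?_⟩ hle) hle
  exact span_monomial_image_le_span_X_image fun a ha ↦
    exists_X_mem_of_monomial_mem (h𝔭.1.2 (Ideal.subset_span (Set.mem_image_of_mem _ ha)))

lemma isPrime_sup_span_X_of_mem_minimalPrimes [IsDomain R] {S : Set (σ →₀ ℕ)}
    {𝔭 : Ideal (MvPolynomial σ R)}
    (h𝔭 : 𝔭 ∈ (Ideal.span ((fun a ↦ monomial a (1 : R)) '' S)).minimalPrimes) (i : σ) :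
    (𝔭 ⊔ Ideal.span {X i}).IsPrime := by
  rw [eq_span_X_image_of_mem_minimalPrimes h𝔭, ← Ideal.span_union, ← Set.image_singleton,
    ← Set.image_union]
  exact isPrime_span_X_image _

end CommRing

/-- For a squarefree monomial ideal `I` and `x_i^k` with `x_i ∉ √I` satisfying
`ass(I + (x_i^k)) = {𝔭 ∈ ass(I) : x_i ∈ 𝔭}`, if there is a minimal prime `𝔭` of `I`
with `x_i ∉ 𝔭` then there is a minimal prime `𝔮` of `I` with `x_i ∈ 𝔮` and
`𝔮 ⊆ 𝔭 + (x_i^k)`; consequently `k = 1`. -/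
theorem statement_6 (n : ℕ) (K : Type) [Field K] (I : Ideal (MvPolynomial (Fin n) K))
    (hsf : IsSquarefreeMonomialIdeal I) (i : Fin n) (k : ℕ) (hk : 1 ≤ k)
    (hx : (X i : MvPolynomial (Fin n) K) ∉ I.radical)
    (hass : associatedPrimes (MvPolynomial (Fin n) K)
        (MvPolynomial (Fin n) K ⧸ (I + Ideal.span {(X i : MvPolynomial (Fin n) K) ^ k})) =
      {𝔭 ∈ associatedPrimes (MvPolynomial (Fin n) K) (MvPolynomial (Fin n) K ⧸ I) |
        (X i : MvPolynomial (Fin n) K) ∈ 𝔭})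
    (𝔭 : Ideal (MvPolynomial (Fin n) K)) (h𝔭 : 𝔭 ∈ I.minimalPrimes)
    (hx𝔭 : (X i : MvPolynomial (Fin n) K) ∉ 𝔭) :
    (∃ 𝔮 ∈ I.minimalPrimes, (X i : MvPolynomial (Fin n) K) ∈ 𝔮 ∧
      𝔮 ≤ 𝔭 + Ideal.span {(X i : MvPolynomial (Fin n) K) ^ k}) ∧ k = 1 := by
  obtain ⟨S, hS, rfl⟩ := hsf
  exact statement_6_general (isRadical_span_monomial_image hS) hk
    (hass.subset.trans (Set.sep_subset _ _)) h𝔭.1.1 h𝔭.1.2 hx𝔭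
    (isPrime_sup_span_X_of_mem_minimalPrimes h𝔭 i)

end Paper
end
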